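/- arXiv:math/0503157 — 2 statements merged into one kernel-verified Lean document; each statement's English description precedes it below -/
import Mathlib

section
/- Let f_1,...,f_r be a regular sequence of monomials in a polynomial ring S over a field, let J be an ideal of S and Q an ideal of S (Q = S allowed). Then for any i ≠ r, (f_i(J : Q)) : f_r = f_i(J : (f_r Q)). -/
/-!
The terms of a regular sequence of monomials have pairwise disjoint supports. Indeed let `x^a` be an
earlier term than `x^e`. As `x^(a - e) * x^e` is a multiple of `x^a`, regularity puts `x^(a - e)` in
the ideal of the terms preceding `x^e`, so one of these terms divides `x^(a - e)`, hence `x^a`. By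
induction the preceding terms are pairwise disjoint, and none is `1`, so that term is `x^a` itself;
then `a ≤ a - e`, which says that `a` and `e` are disjoint (`disjoint_exponents`).

Consequently `f i ∣ g * f r` implies `f i ∣ g` (`dvd_of_dvd_mul_monomial`). So if `g * f r = f i * h`
with `h ∈ J : Q`, then `g = f i * c`, and cancelling `f i` gives `c * f r = h ∈ J : Q`, that is
`c ∈ J : (f r Q)`. The other inclusion is immediate.
-/

open MvPolynomial

/-- A (monic) monomial in a polynomial ring. -/
def IsMonomial {k : Type*} [Field k] {N : ℕ} (f : MvPolynomial (Fin N) k) : Prop :=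
  ∃ d : Fin N →₀ ℕ, f = monomial d 1

/-- A monomial ideal: an ideal generated by monomials. -/
def IsMonomialIdeal {k : Type*} [Field k] {N : ℕ} (Q : Ideal (MvPolynomial (Fin N) k)) : Prop :=
  ∃ A : Set (MvPolynomial (Fin N) k), (∀ f ∈ A, IsMonomial f) ∧ Q = Ideal.span A

/-- `f 0, ..., f (r-1)` is a regular sequence: the ideal it generates is proper and each
`f i` is a nonzerodivisor modulo the ideal generated by the previous ones. -/
def IsRegularSeq {k : Type*} [Field k] {N : ℕ} {r : ℕ}
    (f : Fin r → MvPolynomial (Fin N) k) : Prop :=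
  Ideal.span (Set.range f) ≠ ⊤ ∧
  ∀ (i : Fin r) (g : MvPolynomial (Fin N) k),
    g * f i ∈ Ideal.span (f '' {j | j < i}) → g ∈ Ideal.span (f '' {j | j < i})

/-- The terms of a regular sequence of monomials have pairwise disjoint supports. -/
theorem disjoint_exponents {k : Type*} [Field k] {N n : ℕ}
    (f : Fin n → MvPolynomial (Fin N) k) (d : Fin n → Fin N →₀ ℕ)
    (hd : ∀ i, f i = monomial (d i) 1) (hreg : IsRegularSeq f) (s : Fin n) :
    ∀ i < s, ∀ x, d i x = 0 ∨ d s x = 0 := by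
  have hne : ∀ j, d j ≠ 0 := by
    intro j hj
    apply hreg.1
    rw [Ideal.eq_top_iff_one]
    apply Ideal.subset_span
    refine ⟨j, ?_⟩
    rw [hd, hj]
    rfl
  induction s using WellFoundedLT.induction with
  | ind s ih =>
    intro i hi
    have himg : f '' {j | j < s} = (fun e => monomial e (1 : k)) '' (d '' {j | j < s}) := by
      rw [Set.image_image]
      exact Set.image_congr fun j _ => hd j
    have h1 : monomial (d i - d s) (1 : k) * f s ∈ Ideal.span (f '' {j | j < s}) := by
      have h2 : monomial (d i - d s) (1 : k) * f s = monomial (d s - d i) 1 * f i := by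
        have hexp : d i - d s + d s = d s - d i + d i := by
          ext x
          simp only [Finsupp.add_apply, Finsupp.tsub_apply]
          omega
        rw [hd, hd, monomial_mul, monomial_mul, hexp]
      rw [h2]
      exact Ideal.mul_mem_left _ _ (Ideal.subset_span ⟨i, hi, rfl⟩)
    -- Some earlier `f j` divides `x^(d i - d s)`, hence `f i`; disjointness leaves only `j = i`.
    have h3 := hreg.2 s _ h1
    rw [himg, mem_ideal_span_monomial_image] at h3
    obtain ⟨_, ⟨j, hj, rfl⟩, hle⟩ := h3 (d i - d s) (by simp)
    have hle' : ∀ x, d j x ≤ d i x - d s x := fun x => by simpa using hle x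
    rcases lt_trichotomy j i with hji | rfl | hij
    · refine absurd (Finsupp.ext fun x => ?_) (hne j)
      have := hle' x
      have := ih i hi j hji x
      change d j x = 0
      omega
    · intro x
      have := hle' x
      omega
    · refine absurd (Finsupp.ext fun x => ?_) (hne j)
      have := hle' x
      have := ih j hj i hij x
      change d j x = 0
      omega

/-- If `x^a` and `x^e` have disjoint supports, then `x^e` is a nonzerodivisor modulo `x^a`. -/
theorem dvd_of_dvd_mul_monomial {k : Type*} [Field k] {N : ℕ} (a e : Fin N →₀ ℕ)
    (h : ∀ x, a x = 0 ∨ e x = 0) (g : MvPolynomial (Fin N) k)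
    (hg : monomial a 1 ∣ g * monomial e 1) : monomial a 1 ∣ g := by
  have key : ∀ p : MvPolynomial (Fin N) k, monomial a 1 ∣ p ↔ ∀ x ∈ p.support, a ≤ x := by
    intro p
    have := mem_ideal_span_monomial_image (x := p) (s := {a})
    rw [Set.image_singleton, Ideal.mem_span_singleton] at this
    simpa using this
  rw [key] at hg ⊢
  intro x hx
  have h1 := hg (x + e) (by
    rw [mem_support_iff, coeff_mul_monomial, mul_one]
    exact mem_support_iff.1 hx)
  intro y
  have h2 := h1 y
  have h3 := h y
  simp only [Finsupp.add_apply] at h2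
  omega

/-- For a regular sequence of monomials `f 0, ..., f r`, ideals `J` and `Q` (`Q = S` allowed)
and any index `i ≠ r`, one has `(f i • (J : Q)) : f r = f i • (J : (f r • Q))`. -/
theorem smul_colon_colon_last {k : Type*} [Field k] {N : ℕ}
    (r : ℕ) (f : Fin (r + 1) → MvPolynomial (Fin N) k)
    (hmon : ∀ i, IsMonomial (f i)) (hreg : IsRegularSeq f)
    (J Q : Ideal (MvPolynomial (Fin N) k))
    (i : Fin (r + 1)) (hi : i ≠ Fin.last r) :
    Submodule.colon (Ideal.span {f i} * Submodule.colon J Q) (Ideal.span {f (Fin.last r)}) =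
      Ideal.span {f i} * Submodule.colon J (Ideal.span {f (Fin.last r)} * Q) := by
  choose d hd using hmon
  have hdis := disjoint_exponents f d hd hreg (Fin.last r) i (Fin.lt_last_iff_ne_last.2 hi)
  have h0 : f i ≠ 0 := by rw [hd]; simp
  have hcolon : ∀ c, c ∈ Submodule.colon J (Ideal.span {f (Fin.last r)} * Q : Ideal _) ↔
      c * f (Fin.last r) ∈ Submodule.colon J (Q : Set (MvPolynomial (Fin N) k)) := by
    intro c
    simp only [Submodule.mem_colon, smul_eq_mul, SetLike.mem_coe,
      Ideal.mem_span_singleton_mul]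
    constructor
    · intro h q hq
      rw [mul_assoc]
      exact h _ ⟨q, hq, rfl⟩
    · rintro h _ ⟨q, hq, rfl⟩
      rw [← mul_assoc]
      exact h q hq
  ext g
  rw [Ideal.span, Submodule.colon_span, Submodule.mem_colon_singleton, smul_eq_mul]
  change g * f (Fin.last r) ∈ Ideal.span {f i} * _ ↔ g ∈ Ideal.span {f i} * _
  rw [Ideal.mem_span_singleton_mul, Ideal.mem_span_singleton_mul]
  constructor
  · rintro ⟨h, hh, heq⟩
    obtain ⟨c, rfl⟩ : f i ∣ g := by
      rw [hd i]
      apply dvd_of_dvd_mul_monomial _ _ hdis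
      rw [← hd i, ← hd (Fin.last r)]
      exact ⟨h, heq.symm⟩
    refine ⟨c, (hcolon c).2 ?_, rfl⟩
    rw [mul_assoc] at heq
    rwa [← mul_left_cancel₀ h0 heq]
  · rintro ⟨c, hc, rfl⟩
    exact ⟨_, (hcolon c).1 hc, (mul_assoc _ _ _).symm⟩
end

section
/- Let J be a monomial complete intersection ideal in a polynomial ring S over a field, let f_1,...,f_r be a regular sequence of monomials in S, and let Q_1,...,Q_r be monomial ideals of S (Q_i = S allowed). Then (Σ_{i=1}^{r−1} f_i(J : Q_i)) ∩ f_r(J : Q_r) = f_r · (Σ_{i=1}^{r−1} f_i(J : (f_r Q_i + f_i Q_r))). -/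
/-!
All ideals involved are monomial, in the sense that they contain every monomial occurring in each
of their elements. A monomial in a sum of such ideals lies in one of the summands, so intersecting
with `f_r (J : Q_r)` distributes over the sum, and everything reduces to
`f_i (J : Q_i) ∩ f_r (J : Q_r) = f_r f_i (J : (f_r Q_i + f_i Q_r))`.

This identity holds because `f_i` and `f_r` are coprime: if `f_i a = f_r b`, then `a = f_r c` and
`b = f_i c`, and `a Q_i ⊆ J`, `b Q_r ⊆ J` say precisely that `c` lies in the colon ideal on the
right. Coprimality (`disjoint_of_regular`) is a statement about exponent vectors: regularity turns
into a divisibility condition there, which first forces that no `f_j` divides another `f_i`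
(`eq_of_le_of_regular`).
-/

open MvPolynomial

/-- A monomial complete intersection: an ideal generated by a regular sequence of monomials. -/
def IsMonomialCI {k : Type*} [Field k] {N : ℕ} (I : Ideal (MvPolynomial (Fin N) k)) : Prop :=
  ∃ (r : ℕ) (f : Fin r → MvPolynomial (Fin N) k),
    (∀ i, IsMonomial (f i)) ∧ IsRegularSeq f ∧ I = Ideal.span (Set.range f)

section ColonIntersection

variable {k : Type*} [Field k] {N : ℕ}

/-- The ideal `I` contains every monomial occurring in one of its elements. This is the
generator-free form of being a monomial ideal. -/
def HasMonomialSupport (I : Ideal (MvPolynomial (Fin N) k)) : Prop :=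
  ∀ p ∈ I, ∀ u ∈ p.support, monomial u (1 : k) ∈ I

lemma hasMonomialSupport_of_isMonomialIdeal {I : Ideal (MvPolynomial (Fin N) k)}
    (hI : IsMonomialIdeal I) : HasMonomialSupport I := by
  obtain ⟨A, hA, rfl⟩ := hI
  have hAs : A = (fun d => monomial d (1 : k)) '' {d | monomial d (1 : k) ∈ A} := by
    ext p
    constructor
    · intro hp
      obtain ⟨d, rfl⟩ := hA p hp
      exact ⟨d, hp, rfl⟩
    · rintro ⟨d, hd, rfl⟩
      exact hd
  intro p hp u hu
  rw [hAs, mem_ideal_span_monomial_image] at hp ⊢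
  intro v hv
  obtain rfl : v = u := by
    by_contra h
    simp [mem_support_iff, coeff_monomial, Ne.symm h] at hv
  exact hp _ hu

lemma isMonomialIdeal_of_isMonomialCI {J : Ideal (MvPolynomial (Fin N) k)}
    (hJ : IsMonomialCI J) : IsMonomialIdeal J := by
  obtain ⟨r, f, hf, -, rfl⟩ := hJ
  exact ⟨Set.range f, by rintro _ ⟨i, rfl⟩; exact hf i, rfl⟩

lemma hasMonomialSupport_colon {J Q : Ideal (MvPolynomial (Fin N) k)}
    (hJ : HasMonomialSupport J) (hQ : IsMonomialIdeal Q) :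
    HasMonomialSupport (Submodule.colon J (Q : Set (MvPolynomial (Fin N) k))) := by
  obtain ⟨A, hA, rfl⟩ := hQ
  intro p hp u hu
  have hspan : ((Ideal.span A : Ideal (MvPolynomial (Fin N) k)) : Set (MvPolynomial (Fin N) k))
      = (Submodule.span (MvPolynomial (Fin N) k) A) := rfl
  rw [hspan, Submodule.colon_span, Submodule.mem_colon] at hp ⊢
  intro a ha
  have h := hp a ha
  obtain ⟨d, rfl⟩ := hA a ha
  rw [smul_eq_mul] at h ⊢
  rw [monomial_mul, one_mul]
  refine hJ _ h _ ?_
  rw [mem_support_iff, coeff_mul_monomial, mul_one]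
  exact mem_support_iff.mp hu

lemma hasMonomialSupport_monomial_mul {I : Ideal (MvPolynomial (Fin N) k)}
    (hI : HasMonomialSupport I) (d : Fin N →₀ ℕ) :
    HasMonomialSupport (Ideal.span {monomial d (1 : k)} * I) := by
  intro p hp u hu
  obtain ⟨z, hz, rfl⟩ := Ideal.mem_span_singleton_mul.mp hp
  rw [mem_support_iff, coeff_monomial_mul'] at hu
  split_ifs at hu with h
  · refine Ideal.mem_span_singleton_mul.mpr ⟨monomial (u - d) 1, hI z hz _ ?_, ?_⟩
    · rw [mem_support_iff]
      simpa using hu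
    · rw [monomial_mul, one_mul, add_tsub_cancel_of_le h]
  · exact absurd rfl hu

/-- A monomial occurring in an element of a sum of monomial ideals lies in one of the summands. -/
lemma exists_monomial_mem_of_mem_sum {ι : Type*} (s : Finset ι)
    (I : ι → Ideal (MvPolynomial (Fin N) k)) (hI : ∀ i, HasMonomialSupport (I i)) :
    ∀ p ∈ ∑ i ∈ s, I i, ∀ u ∈ p.support, ∃ i ∈ s, monomial u (1 : k) ∈ I i := by
  classical
  induction s using Finset.induction_on with
  | empty =>
    intro p hp u hu
    have hp0 : p = 0 := by simpa using hp
    simp [hp0] at hu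
  | insert a s ha ih =>
    intro p hp u hu
    rw [Finset.sum_insert ha, Ideal.add_eq_sup, Submodule.mem_sup] at hp
    obtain ⟨y, hy, z, hz, rfl⟩ := hp
    rcases Finset.mem_union.mp (support_add hu) with h | h
    · exact ⟨a, Finset.mem_insert_self a s, hI a y hy u h⟩
    · obtain ⟨i, hi, hm⟩ := ih z hz u h
      exact ⟨i, Finset.mem_insert_of_mem hi, hm⟩

lemma mem_of_forall_monomial_mem {I : Ideal (MvPolynomial (Fin N) k)}
    {p : MvPolynomial (Fin N) k} (h : ∀ u ∈ p.support, monomial u (1 : k) ∈ I) : p ∈ I := by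
  rw [p.as_sum]
  refine Ideal.sum_mem _ fun u hu => ?_
  have := I.mul_mem_left (C (coeff u p)) (h u hu)
  rwa [C_mul_monomial, mul_one] at this

lemma ne_zero_of_regular {r : ℕ} {d : Fin r → Fin N →₀ ℕ}
    (hreg : IsRegularSeq fun i => monomial (d i) (1 : k)) (i : Fin r) : d i ≠ 0 := by
  intro h
  apply hreg.1
  rw [Ideal.eq_top_iff_one]
  refine Ideal.subset_span ⟨i, ?_⟩
  simp [h]

/-- Regularity of a sequence of monomials, read off on monomial multipliers: if some earlier
`x ^ d j` divides `x ^ e * x ^ d i`, then some earlier `x ^ d l` divides `x ^ e`. -/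
lemma exists_le_of_regular {r : ℕ} {d : Fin r → Fin N →₀ ℕ}
    (hreg : IsRegularSeq fun i => monomial (d i) (1 : k)) {i j : Fin r} (hj : j < i)
    {e : Fin N →₀ ℕ} (h : d j ≤ e + d i) : ∃ l < i, d l ≤ e := by
  have himg : (fun i => monomial (d i) (1 : k)) '' {j | j < i}
      = (fun s => monomial s (1 : k)) '' (d '' {j | j < i}) := by
    rw [Set.image_image]
  have key := hreg.2 i (monomial e 1)
  rw [himg, mem_ideal_span_monomial_image, mem_ideal_span_monomial_image] at key
  have h1 := key (by
    intro v hv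
    rw [monomial_mul, one_mul] at hv
    obtain rfl : v = e + d i := by
      by_contra hne
      simp [mem_support_iff, coeff_monomial, Ne.symm hne] at hv
    exact ⟨d j, ⟨j, hj, rfl⟩, h⟩)
  obtain ⟨_, ⟨l, hl, rfl⟩, hle⟩ := h1 e (by simp [mem_support_iff])
  exact ⟨l, hl, hle⟩

/-- In a regular sequence of monomials, none divides another. -/
lemma eq_of_le_of_regular {r : ℕ} {d : Fin r → Fin N →₀ ℕ}
    (hreg : IsRegularSeq fun i => monomial (d i) (1 : k)) (i : Fin r) :
    ∀ j : Fin r, d j ≤ d i → j = i := by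
  intro j
  induction j using WellFoundedLT.induction with
  | ind j ih =>
    intro hle
    rcases lt_trichotomy j i with hji | hji | hji
    · obtain ⟨l, -, hl⟩ := exists_le_of_regular hreg hji (e := 0) (by simpa using hle)
      exact absurd (nonpos_iff_eq_zero.mp hl) (ne_zero_of_regular hreg l)
    · exact hji
    · -- Dividing `x ^ d i` by `x ^ d j` gives a multiple of some `x ^ d l` with `l < j`.
      obtain ⟨l, hl, hle'⟩ := exists_le_of_regular hreg hji (e := d i - d j) (by
        rw [tsub_add_cancel_of_le hle])
      obtain rfl := ih l hl (hle'.trans tsub_le_self)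
      exfalso
      apply ne_zero_of_regular hreg j
      ext x
      have h1 := hle x
      have h2 := hle' x
      simp only [Finsupp.coe_tsub, Pi.sub_apply] at h2
      simp only [Finsupp.coe_zero, Pi.zero_apply]
      omega

/-- Two monomials `x ^ d i`, `x ^ d j` with `i < j` in a regular sequence are coprime; this says
that a common multiple is a multiple of the product. -/
lemma disjoint_of_regular {r : ℕ} {d : Fin r → Fin N →₀ ℕ}
    (hreg : IsRegularSeq fun i => monomial (d i) (1 : k)) {i j : Fin r} (hij : i < j)
    {u : Fin N →₀ ℕ} (hi : d i ≤ u) (hj : d j ≤ u) : d i + d j ≤ u := by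
  -- `x ^ d j` times `x ^ (d i - d j)` is the least common multiple of the two monomials.
  obtain ⟨l, -, hle⟩ := exists_le_of_regular hreg hij (e := d i - d j) le_tsub_add
  obtain rfl := eq_of_le_of_regular hreg i l (hle.trans tsub_le_self)
  intro x
  have h1 := hle x
  have h2 := hi x
  have h3 := hj x
  simp only [Finsupp.coe_tsub, Pi.sub_apply] at h1
  simp only [Finsupp.coe_add, Pi.add_apply]
  omega

lemma le_of_monomial_mul_eq {d u : Fin N →₀ ℕ} {z : MvPolynomial (Fin N) k}
    (h : monomial d (1 : k) * z = monomial u 1) : d ≤ u := by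
  by_contra hd
  have := congrArg (coeff u) h
  rw [coeff_monomial_mul', if_neg hd] at this
  simp at this

/-- The pairwise inclusion `a (J : Q) ∩ b (J : Q') ⊆ b a (J : (b Q + a Q'))`, on multiples of
`b * a`; for coprime `a` and `b` these are all elements of the left-hand side. -/
lemma mem_mul_mul_colon {R : Type*} [CommRing R] [IsDomain R] {J Q Q' : Ideal R} {a b c : R}
    (ha : a ≠ 0) (hb : b ≠ 0)
    (h : b * (a * c) ∈ Ideal.span {a} * Submodule.colon J (Q : Set R))
    (h' : b * (a * c) ∈ Ideal.span {b} * Submodule.colon J (Q' : Set R)) :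
    a * c ∈ Ideal.span {a} *
      Submodule.colon J ((Ideal.span {b} * Q + Ideal.span {a} * Q' : Ideal R) : Set R) := by
  obtain ⟨z, hz, hze⟩ := Ideal.mem_span_singleton_mul.mp h
  obtain ⟨w, hw, hwe⟩ := Ideal.mem_span_singleton_mul.mp h'
  obtain rfl : z = b * c := mul_left_cancel₀ ha (by rw [hze]; ring)
  obtain rfl : w = a * c := mul_left_cancel₀ hb hwe
  refine Ideal.mem_span_singleton_mul.mpr ⟨c, ?_, rfl⟩
  rw [Submodule.mem_colon] at hz hw ⊢
  intro p hp
  obtain ⟨y, hy, y', hy', rfl⟩ := Submodule.mem_sup.mp hp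
  obtain ⟨q, hq, rfl⟩ := Ideal.mem_span_singleton_mul.mp hy
  obtain ⟨q', hq', rfl⟩ := Ideal.mem_span_singleton_mul.mp hy'
  have e : c • (b * q + a * q') = (b * c) • q + (a * c) • q' := by
    simp only [smul_eq_mul]; ring
  rw [e]
  exact J.add_mem (hz q hq) (hw q' hq')

lemma mul_mem_of_mem_mul_colon {R : Type*} [CommRing R] {J Q Q' : Ideal R} {a b x : R}
    (h : x ∈ Ideal.span {a} *
      Submodule.colon J ((Ideal.span {b} * Q + Ideal.span {a} * Q' : Ideal R) : Set R)) :
    b * x ∈ Ideal.span {a} * Submodule.colon J (Q : Set R) ∧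
      b * x ∈ Ideal.span {b} * Submodule.colon J (Q' : Set R) := by
  obtain ⟨c, hc, rfl⟩ := Ideal.mem_span_singleton_mul.mp h
  rw [Submodule.mem_colon] at hc
  constructor
  · refine Ideal.mem_span_singleton_mul.mpr ⟨b * c, ?_, by ring⟩
    rw [Submodule.mem_colon]
    intro q hq
    have := hc (b * q) (Submodule.mem_sup_left
      (Ideal.mul_mem_mul (Ideal.mem_span_singleton_self b) hq))
    rwa [smul_eq_mul, mul_left_comm, ← mul_assoc] at this
  · refine Ideal.mem_span_singleton_mul.mpr ⟨a * c, ?_, rfl⟩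
    rw [Submodule.mem_colon]
    intro q hq
    have := hc (a * q) (Submodule.mem_sup_right
      (Ideal.mul_mem_mul (Ideal.mem_span_singleton_self a) hq))
    rwa [smul_eq_mul, mul_left_comm, ← mul_assoc] at this

lemma mem_sum_of_mem {R ι : Type*} [CommRing R] [Fintype ι] {I : ι → Ideal R} {i : ι} {x : R}
    (h : x ∈ I i) : x ∈ ∑ i, I i := by
  rw [Ideal.sum_eq_sup]
  exact Finset.le_sup (f := I) (Finset.mem_univ i) h

end ColonIntersection

/-- For a monomial complete intersection `J`, a regular sequence of monomials `f 0, ..., f r`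
and monomial ideals `Q 0, ..., Q r` (`Q i = S` allowed),
`(Σ_{i<r} f i • (J : Q i)) ∩ (f r • (J : Q r))
  = f r • (Σ_{i<r} f i • (J : (f r • Q i + f i • Q r)))`. -/
theorem sum_smul_colon_inf_last {k : Type*} [Field k] {N : ℕ}
    (J : Ideal (MvPolynomial (Fin N) k)) (hJ : IsMonomialCI J)
    (r : ℕ) (f : Fin (r + 1) → MvPolynomial (Fin N) k)
    (hmon : ∀ i, IsMonomial (f i)) (hreg : IsRegularSeq f)
    (Q : Fin (r + 1) → Ideal (MvPolynomial (Fin N) k)) (hQ : ∀ i, IsMonomialIdeal (Q i)) :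
    (∑ i : Fin r, Ideal.span {f i.castSucc} * Submodule.colon J (Q i.castSucc)) ⊓
        (Ideal.span {f (Fin.last r)} * Submodule.colon J (Q (Fin.last r))) =
      Ideal.span {f (Fin.last r)} *
        ∑ i : Fin r, Ideal.span {f i.castSucc} *
          Submodule.colon J
            (Ideal.span {f (Fin.last r)} * Q i.castSucc +
              Ideal.span {f i.castSucc} * Q (Fin.last r)) := by
  obtain ⟨d, rfl⟩ : ∃ d : Fin (r + 1) → Fin N →₀ ℕ, f = fun i => monomial (d i) (1 : k) := by
    choose d hd using hmon
    exact ⟨d, funext hd⟩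
  have hJm := hasMonomialSupport_of_isMonomialIdeal (isMonomialIdeal_of_isMonomialCI hJ)
  have hm : ∀ i, HasMonomialSupport
      (Ideal.span {monomial (d i) (1 : k)} * Submodule.colon J (Q i)) := fun i =>
    hasMonomialSupport_monomial_mul (hasMonomialSupport_colon hJm (hQ i)) (d i)
  have hne : ∀ i, monomial (d i) (1 : k) ≠ 0 := fun i => by simp
  apply le_antisymm
  · rintro p ⟨hp, hp'⟩
    refine mem_of_forall_monomial_mem fun u hu => ?_
    obtain ⟨i, -, hi⟩ := exists_monomial_mem_of_mem_sum Finset.univ _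
      (fun i : Fin r => hm i.castSucc) p hp u hu
    have hl := hm (Fin.last r) p hp' u hu
    obtain ⟨z, -, hz⟩ := Ideal.mem_span_singleton_mul.mp hi
    obtain ⟨w, -, hw⟩ := Ideal.mem_span_singleton_mul.mp hl
    have hle := disjoint_of_regular hreg (Fin.castSucc_lt_last i)
      (le_of_monomial_mul_eq hz) (le_of_monomial_mul_eq hw)
    have hu' : monomial u (1 : k) = monomial (d (Fin.last r)) 1 *
        (monomial (d i.castSucc) 1 *
          monomial (u - (d i.castSucc + d (Fin.last r))) 1) := by
      rw [monomial_mul, monomial_mul, one_mul, one_mul, ← add_assoc,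
        add_comm (d (Fin.last r)), add_tsub_cancel_of_le hle]
    rw [hu'] at hi hl ⊢
    refine Ideal.mul_mem_mul (Ideal.mem_span_singleton_self _) ?_
    exact mem_sum_of_mem (i := i) (mem_mul_mul_colon (hne _) (hne _) hi hl)
  · rw [Finset.mul_sum, Ideal.sum_eq_sup]
    refine Finset.sup_le fun i _ => ?_
    intro p hp
    obtain ⟨x, hx, rfl⟩ := Ideal.mem_span_singleton_mul.mp hp
    obtain ⟨h1, h2⟩ := mul_mem_of_mem_mul_colon hx
    exact ⟨mem_sum_of_mem (i := i) h1, h2⟩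
end
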